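/- arXiv:2401.02700 — 2 statements merged into one kernel-verified Lean document; each statement's English description precedes it below -/
import Mathlib

section
/- Let f : ℝ → ℝ be a polynomial of degree at most q with |f(x)| ≤ 1 for all x ∈ [−1, 1]. Then for all x ∈ [−1, 1], |f'(x)| ≤ q². -/
/-!
For a trigonometric polynomial `T` of degree at most `n`, M. Riesz's interpolation formula writes
`T'(θ)` as a combination of the `2n` values `T(θ + tₖ)`, `tₖ = (2k + 1)π / 2n`, with weights that
are samples of the Fejér kernel with alternating signs. The absolute values of the weights add up
to `n`, which gives Bernstein's inequality `‖T'‖ ≤ n ‖T‖`.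

Markov's inequality is Bernstein's inequality used twice. If `|f| ≤ 1` on `[-1, 1]`, applying it to
`f(cos θ)` gives `|f'(cos θ) sin θ| ≤ n`. Now `f'(cos θ) sin θ` is again a trigonometric polynomial
of degree at most `n`, with derivative `f'(1)` at `θ = 0`, so `|f'(1)| ≤ n²`. The second step gives
`|p(1)| ≤ n M` for every polynomial `p` of degree less than `n` with `|p(x)| √(1 - x²) ≤ M` on
`[-1, 1]`. For `|x| ≤ 1` the dilation `s ↦ p(x s)` satisfies the same bound, so `|p(x)| ≤ n M`
(Schur's inequality); take `p = f'` and `M = n`.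
-/

open Complex ComplexConjugate Finset Polynomial

section RieszInterpolation

/-- The nodes `(2k + 1)π / 2n`, `k < 2n`, of M. Riesz's interpolation formula: the zeros of
`cos (n t)` in `[0, 2π]`. -/
noncomputable def rieszNode (n k : ℕ) : ℝ := (2 * k + 1) * Real.pi / (2 * n)

/-- The weights of M. Riesz's interpolation formula for the derivative of a trigonometric
polynomial of degree at most `n`. They are often written `(-1)ᵏ / (4 n sin² (tₖ / 2))`; the form
chosen here exhibits the Fejér kernel at the node `tₖ`. -/
noncomputable def rieszWeight (n k : ℕ) : ℝ :=
  (-1) ^ k / (2 * n) * ‖∑ j ∈ range n, exp (rieszNode n k * I) ^ j‖ ^ 2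

variable {n : ℕ}

lemma exp_rieszNode_pow (hn : n ≠ 0) (k : ℕ) : exp (rieszNode n k * I) ^ n = (-1) ^ k * I := by
  have angle : (n : ℂ) * (rieszNode n k * I) = k * (Real.pi * I) + Real.pi / 2 * I := by
    simp only [rieszNode]
    push_cast
    field_simp
  rw [← exp_nat_mul, angle, exp_add, exp_nat_mul, exp_pi_mul_I, exp_pi_div_two_mul_I]

lemma exp_rieszNode_eq_mul_pow (hn : n ≠ 0) (k : ℕ) :
    exp (rieszNode n k * I) =
      exp (rieszNode n 0 * I) * exp (2 * Real.pi * I / (2 * n : ℕ)) ^ k := by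
  rw [← exp_nat_mul, ← exp_add]
  congr 1
  simp only [rieszNode]
  push_cast
  field_simp
  ring

lemma sum_exp_rieszNode_zpow_eq_zero {l : ℤ} (hl : ¬ (2 * n : ℤ) ∣ l) :
    ∑ k ∈ range (2 * n), exp (rieszNode n k * I) ^ l = 0 := by
  rcases eq_or_ne n 0 with rfl | hn
  · simp
  have hω := isPrimitiveRoot_exp (2 * n) (by positivity)
  set ω := exp (2 * Real.pi * I / (2 * n : ℕ))
  have hne : ω ^ l ≠ 1 := fun h ↦ hl (mod_cast (hω.zpow_eq_one_iff_dvd l).mp h)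
  have hpow : (ω ^ l) ^ (2 * n) = 1 := by
    rw [← zpow_natCast, ← zpow_mul, mul_comm, zpow_mul, zpow_natCast, hω.pow_eq_one, one_zpow]
  calc ∑ k ∈ range (2 * n), exp (rieszNode n k * I) ^ l
      = exp (rieszNode n 0 * I) ^ l * ∑ k ∈ range (2 * n), (ω ^ l) ^ k := by
        rw [mul_sum]
        refine sum_congr rfl fun k _ ↦ ?_
        rw [exp_rieszNode_eq_mul_pow hn, mul_zpow, ← zpow_natCast, zpow_comm, zpow_natCast]
    _ = 0 := by rw [geom_sum_eq hne, hpow, sub_self, zero_div, mul_zero]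

lemma sum_exp_rieszNode_zpow_two_mul (hn : n ≠ 0) :
    ∑ k ∈ range (2 * n), exp (rieszNode n k * I) ^ (2 * n : ℤ) = -(2 * n) := by
  have h (k : ℕ) : exp (rieszNode n k * I) ^ (2 * n : ℤ) = -1 := by
    rw [zpow_mul', zpow_natCast, exp_rieszNode_pow hn, zpow_ofNat, mul_pow, I_sq, pow_right_comm,
      neg_one_sq, one_pow, one_mul]
  simp [h]

lemma sum_exp_rieszNode_zpow_eq_ite {l : ℤ} (hl : l ∈ Set.Ioo 0 (4 * n : ℤ)) :
    ∑ k ∈ range (2 * n), exp (rieszNode n k * I) ^ l =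
      if l = 2 * n then -(2 * n : ℂ) else 0 := by
  split_ifs with h
  · rw [h, sum_exp_rieszNode_zpow_two_mul (by grind)]
  · refine sum_exp_rieszNode_zpow_eq_zero fun ⟨c, hc⟩ ↦ h ?_
    have c_pos : 0 < c := by nlinarith [hl.1]
    have c_lt_two : c < 2 := by nlinarith [hl.1, hl.2]
    obtain rfl : c = 1 := by omega
    rw [hc, mul_one]

lemma norm_sum_pow_sq_eq_sum_zpow (n : ℕ) {z : ℂ} (hz : ‖z‖ = 1) :
    ((‖∑ j ∈ range n, z ^ j‖ ^ 2 : ℝ) : ℂ) =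
      ∑ b ∈ range n, ∑ a ∈ range n, z ^ ((a : ℤ) - b) := by
  have hz0 : z ≠ 0 := norm_ne_zero_iff.mp (by simp [hz])
  rw [ofReal_pow, ← conj_mul', map_sum, sum_mul_sum]
  refine sum_congr rfl fun b _ ↦ sum_congr rfl fun a _ ↦ ?_
  rw [map_pow, ← inv_eq_conj hz, zpow_sub₀ hz0, zpow_natCast, zpow_natCast, inv_pow,
    inv_mul_eq_div]

lemma rieszWeight_mul_exp_zpow (hn : n ≠ 0) (k : ℕ) (m : ℤ) :
    rieszWeight n k * exp (rieszNode n k * I) ^ m =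
      -I / (2 * n) * ∑ b ∈ range n, ∑ a ∈ range n,
        exp (rieszNode n k * I) ^ (n + m + a - b : ℤ) := by
  have hz := norm_exp_ofReal_mul_I (rieszNode n k)
  have sign : (-1 : ℂ) ^ k = -I * exp (rieszNode n k * I) ^ (n : ℤ) := by
    rw [zpow_natCast, exp_rieszNode_pow hn, mul_left_comm, neg_mul, I_mul_I, neg_neg, mul_one]
  simp_rw [add_sub_assoc, zpow_add₀ (exp_ne_zero _), ← mul_sum]
  rw [← norm_sum_pow_sq_eq_sum_zpow n hz, rieszWeight]
  push_cast
  rw [sign]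
  ring

lemma sum_rieszWeight_mul_exp_pow {m : ℕ} (hm : m ≤ n) :
    ∑ k ∈ range (2 * n), rieszWeight n k * exp (rieszNode n k * I) ^ m = m * I := by
  rcases eq_or_ne n 0 with rfl | hn
  · simp [Nat.le_zero.mp hm]
  have orthogonality {a b : ℕ} (ha : a < n) (hb : b < n) :
      ∑ k ∈ range (2 * n), exp (rieszNode n k * I) ^ (n + m + a - b : ℤ) =
        if a = n - m + b then -(2 * n : ℂ) else 0 := by
    rw [sum_exp_rieszNode_zpow_eq_ite (by grind)]
    congr 1
    grind
  have count : ∑ b ∈ range n, ∑ a ∈ range n, (if a = n - m + b then -(2 * n : ℂ) else 0) =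
      m * -(2 * n) := by
    simp_rw [sum_ite_eq', mem_range]
    rw [← sum_filter, sum_const, nsmul_eq_mul,
      show {b ∈ range n | n - m + b < n} = range m by grind, card_range]
  calc ∑ k ∈ range (2 * n), rieszWeight n k * exp (rieszNode n k * I) ^ m
      = -I / (2 * n) * ∑ b ∈ range n, ∑ a ∈ range n, ∑ k ∈ range (2 * n),
          exp (rieszNode n k * I) ^ (n + m + a - b : ℤ) := by
        simp_rw [← zpow_natCast _ m, rieszWeight_mul_exp_zpow hn, ← mul_sum]
        rw [sum_comm]
        simp_rw [sum_comm (s := range (2 * n))]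
    _ = -I / (2 * n) * (m * -(2 * n)) := by
        rw [← count]
        congr! 3 with b hb a ha
        exact orthogonality (mem_range.mp ha) (mem_range.mp hb)
    _ = m * I := by field_simp

lemma sum_rieszWeight_mul_exp_zpow {m : ℤ} (hm : m ∈ Set.Icc (-n : ℤ) n) :
    ∑ k ∈ range (2 * n), rieszWeight n k * exp (rieszNode n k * I) ^ m = m * I := by
  obtain ⟨j, rfl | rfl⟩ := m.eq_nat_or_neg
  · simpa using sum_rieszWeight_mul_exp_pow (n := n) (m := j) (by simpa using hm.2)
  · have h := congrArg conj (sum_rieszWeight_mul_exp_pow (n := n) (m := j) (by simpa using hm.1))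
    simpa [map_sum, ← inv_eq_conj (norm_exp_ofReal_mul_I _)] using h

lemma sum_abs_rieszWeight (n : ℕ) : ∑ k ∈ range (2 * n), |rieszWeight n k| = n := by
  rcases eq_or_ne n 0 with rfl | hn
  · simp
  have abs_eq (k : ℕ) : |rieszWeight n k| = rieszWeight n k * (-1) ^ k := by
    rw [rieszWeight, abs_mul, abs_div, abs_neg_one_pow, abs_of_nonneg (by positivity),
      abs_of_nonneg (by positivity), mul_right_comm, div_mul_eq_mul_div _ _ ((-1) ^ k), ← mul_pow,
      neg_one_mul, neg_neg, one_pow]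
  have h := sum_rieszWeight_mul_exp_pow (le_refl n)
  simp_rw [exp_rieszNode_pow hn, ← mul_assoc] at h
  rw [← sum_mul] at h
  simp_rw [abs_eq]
  exact_mod_cast mul_right_cancel₀ I_ne_zero h

end RieszInterpolation

/-- The complex trigonometric polynomials of degree at most `n`, as functions of a real angle. -/
noncomputable def trigPolynomial (n : ℕ) : Submodule ℂ (ℝ → ℂ) :=
  Submodule.span ℂ ((fun (m : ℤ) (θ : ℝ) ↦ exp (θ * I) ^ m) '' Set.Icc (-n : ℤ) n)

namespace trigPolynomial

variable {m n : ℕ} {f g : ℝ → ℂ}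

lemma mono (h : m ≤ n) : trigPolynomial m ≤ trigPolynomial n :=
  Submodule.span_mono (Set.image_mono (Set.Icc_subset_Icc (by omega) (by omega)))

lemma exp_zpow_mem {l : ℤ} (hl : l ∈ Set.Icc (-n : ℤ) n) :
    (fun θ : ℝ ↦ exp (θ * I) ^ l) ∈ trigPolynomial n :=
  Submodule.subset_span (Set.mem_image_of_mem _ hl)

lemma mul_mem (hf : f ∈ trigPolynomial m) (hg : g ∈ trigPolynomial n) :
    f * g ∈ trigPolynomial (m + n) := by
  have h := Submodule.mul_mem_mul hf hg
  rw [trigPolynomial, trigPolynomial, Submodule.span_mul_span] at h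
  refine Submodule.span_le.mpr ?_ h
  rintro _ ⟨_, ⟨a, ha, rfl⟩, _, ⟨b, hb, rfl⟩, rfl⟩
  have hab : a + b ∈ Set.Icc (-(m + n : ℕ) : ℤ) (m + n : ℕ) := by grind
  simpa only [zpow_add₀ (exp_ne_zero _), SetLike.mem_coe, Pi.mul_def] using exp_zpow_mem hab

lemma cos_mem : (fun θ : ℝ ↦ cos θ) ∈ trigPolynomial 1 := by
  have h := (trigPolynomial 1).smul_mem (2⁻¹ : ℂ)
    ((trigPolynomial 1).add_mem (exp_zpow_mem (l := 1) (by simp))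
      (exp_zpow_mem (l := -1) (by simp)))
  convert h using 2 with θ
  simp [cos, ← exp_neg, div_eq_inv_mul]

lemma sin_mem : (fun θ : ℝ ↦ sin θ) ∈ trigPolynomial 1 := by
  have h := (trigPolynomial 1).smul_mem (I / 2)
    ((trigPolynomial 1).sub_mem (exp_zpow_mem (l := -1) (by simp))
      (exp_zpow_mem (l := 1) (by simp)))
  convert h using 2 with θ
  simp [sin, ← exp_neg]
  ring

lemma cos_pow_mem (n : ℕ) : (fun θ : ℝ ↦ cos θ ^ n) ∈ trigPolynomial n := by
  induction n with
  | zero => simpa using exp_zpow_mem (n := 0) (l := 0) (by simp)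
  | succ n ih => exact mul_mem ih cos_mem

lemma eval_cos_mem {p : ℂ[X]} (hp : p.natDegree ≤ n) :
    (fun θ : ℝ ↦ p.eval (cos θ)) ∈ trigPolynomial n := by
  have expand : (fun θ : ℝ ↦ p.eval (cos θ)) =
      ∑ i ∈ range (n + 1), p.coeff i • fun θ : ℝ ↦ cos θ ^ i := by
    ext θ
    simp [eval_eq_sum_range' (Nat.lt_succ_of_le hp)]
  rw [expand]
  exact Submodule.sum_mem _ fun i hi ↦
    Submodule.smul_mem _ _ (mono (mem_range_succ_iff.mp hi) (cos_pow_mem i))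

lemma eval_cos_mul_sin_mem {p : ℂ[X]} (hp : p.natDegree < n) :
    (fun θ : ℝ ↦ p.eval (cos θ) * sin θ) ∈ trigPolynomial n :=
  mono (Nat.succ_le_of_lt hp) (mul_mem (eval_cos_mem (le_refl p.natDegree)) sin_mem :)

theorem hasDerivAt_sum_rieszWeight (hf : f ∈ trigPolynomial n) (θ : ℝ) :
    HasDerivAt f (∑ k ∈ range (2 * n), rieszWeight n k * f (θ + rieszNode n k)) θ := by
  induction hf using Submodule.span_induction with
  | mem f hf =>
    obtain ⟨m, hm, rfl⟩ := hf
    have h : HasDerivAt (fun θ : ℝ ↦ exp (θ * I) ^ m) (exp (θ * I) ^ m * (m * I)) θ := by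
      simp_rw [← exp_int_mul]
      simpa [mul_comm, mul_left_comm] using
        (((hasDerivAt_id (θ : ℂ)).mul_const I).const_mul (m : ℂ)).cexp.comp_ofReal
    convert h using 1
    rw [← sum_rieszWeight_mul_exp_zpow hm, mul_sum]
    refine sum_congr rfl fun k _ ↦ ?_
    simp only [ofReal_add, add_mul, exp_add, mul_zpow, mul_left_comm]
  | zero => simp
  | add f g _ _ hf hg =>
    simpa only [Pi.add_apply, mul_add, sum_add_distrib] using hf.add hg
  | smul c f _ hf =>
    simpa only [Pi.smul_apply, smul_eq_mul, mul_sum, mul_left_comm] using hf.const_smul c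

theorem norm_deriv_le (hf : f ∈ trigPolynomial n) {M : ℝ} (hM : ∀ θ, ‖f θ‖ ≤ M) (θ : ℝ) :
    ‖deriv f θ‖ ≤ n * M := by
  rw [(hasDerivAt_sum_rieszWeight hf θ).deriv, ← sum_abs_rieszWeight, sum_mul]
  refine norm_sum_le_of_le _ fun k _ ↦ ?_
  rw [norm_mul, norm_real, Real.norm_eq_abs]
  gcongr
  exact hM _

end trigPolynomial

section AlgebraicPolynomials

variable {n : ℕ} {p : ℂ[X]} {M : ℝ}

theorem norm_eval_derivative_mul_sqrt_le (hp : p.natDegree ≤ n)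
    (hM : ∀ x ∈ Set.Icc (-1 : ℝ) 1, ‖p.eval (x : ℂ)‖ ≤ M) {x : ℝ} (hx : x ∈ Set.Icc (-1 : ℝ) 1) :
    ‖p.derivative.eval (x : ℂ)‖ * √(1 - x ^ 2) ≤ n * M := by
  have hderiv (θ : ℝ) : HasDerivAt (fun θ : ℝ ↦ p.eval (cos θ))
      (p.derivative.eval (cos θ) * -sin θ) θ :=
    ((p.hasDerivAt _).comp _ (hasDerivAt_cos _)).comp_ofReal
  have hcos (θ : ℝ) : ‖p.eval (cos θ)‖ ≤ M := by
    simpa using hM _ (Real.cos_mem_Icc θ)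
  have h := trigPolynomial.norm_deriv_le (trigPolynomial.eval_cos_mem hp) hcos (Real.arccos x)
  rwa [(hderiv _).deriv, norm_mul, norm_neg, ← ofReal_cos, ← ofReal_sin,
    Real.cos_arccos hx.1 hx.2, Real.sin_arccos, norm_real, Real.norm_of_nonneg (by positivity)] at h

lemma norm_eval_one_le_of_norm_eval_mul_sqrt_le (hp : p.natDegree < n)
    (hM : ∀ x ∈ Set.Icc (-1 : ℝ) 1, ‖p.eval (x : ℂ)‖ * √(1 - x ^ 2) ≤ M) :
    ‖p.eval 1‖ ≤ n * M := by
  have hsin (θ : ℝ) : ‖p.eval (cos θ) * sin θ‖ ≤ M := by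
    have h := hM _ (Real.cos_mem_Icc θ)
    rwa [← Real.abs_sin_eq_sqrt_one_sub_cos_sq, ← Real.norm_eq_abs, ← norm_real, ofReal_sin,
      ofReal_cos, ← norm_mul] at h
  have hderiv : HasDerivAt (fun θ : ℝ ↦ p.eval (cos θ) * sin θ) (p.eval 1) 0 := by
    simpa using (((p.hasDerivAt _).comp _ (hasDerivAt_cos _)).mul (hasDerivAt_sin _)).comp_ofReal
      (z := 0)
  simpa only [hderiv.deriv] using
    trigPolynomial.norm_deriv_le (trigPolynomial.eval_cos_mul_sin_mem hp) hsin 0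

theorem norm_eval_le_of_norm_eval_mul_sqrt_le (hp : p.natDegree < n)
    (hM : ∀ x ∈ Set.Icc (-1 : ℝ) 1, ‖p.eval (x : ℂ)‖ * √(1 - x ^ 2) ≤ M)
    {x : ℝ} (hx : x ∈ Set.Icc (-1 : ℝ) 1) : ‖p.eval (x : ℂ)‖ ≤ n * M := by
  have hdeg : (p.comp (C (x : ℂ) * X)).natDegree < n :=
    (natDegree_comp_le.trans (mul_le_of_le_one_right (Nat.zero_le _)
      ((natDegree_C_mul_le _ _).trans natDegree_X_le))).trans_lt hp
  have heval (s : ℂ) : (p.comp (C (x : ℂ) * X)).eval s = p.eval (x * s) := by simp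
  have hdil : ∀ s ∈ Set.Icc (-1 : ℝ) 1,
      ‖(p.comp (C (x : ℂ) * X)).eval (s : ℂ)‖ * √(1 - s ^ 2) ≤ M := by
    intro s hs
    have hx2 : x ^ 2 ≤ 1 := (sq_le_one_iff_abs_le_one x).mpr (abs_le.mpr hx)
    have hxs : (x * s) ^ 2 ≤ s ^ 2 := by
      rw [mul_pow]
      exact mul_le_of_le_one_left (sq_nonneg s) hx2
    have hs2 : s ^ 2 ≤ 1 := (sq_le_one_iff_abs_le_one s).mpr (abs_le.mpr hs)
    refine le_trans ?_ (hM (x * s) (abs_le.mp ((sq_le_one_iff_abs_le_one _).mp (hxs.trans hs2))))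
    rw [heval, ofReal_mul]
    gcongr
  simpa only [heval, mul_one] using norm_eval_one_le_of_norm_eval_mul_sqrt_le hdeg hdil

end AlgebraicPolynomials

theorem stmt5_general (q : ℕ) (f : ℂ[X]) (hdeg : f.natDegree ≤ q) {M : ℝ}
    (hM : ∀ x ∈ Set.Icc (-1 : ℝ) 1, ‖f.eval (x : ℂ)‖ ≤ M) :
    ∀ x ∈ Set.Icc (-1 : ℝ) 1, ‖f.derivative.eval (x : ℂ)‖ ≤ (q : ℝ) ^ 2 * M := by
  intro x hx
  rcases eq_or_ne f.natDegree 0 with h0 | h0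
  · have hM0 : 0 ≤ M := (norm_nonneg _).trans (hM x hx)
    rw [derivative_of_natDegree_zero h0, eval_zero, norm_zero]
    positivity
  · have hdeg' : f.derivative.natDegree < q := (natDegree_derivative_lt h0).trans_le hdeg
    rw [sq, mul_assoc]
    exact norm_eval_le_of_norm_eval_mul_sqrt_le hdeg'
      (fun _ hy ↦ norm_eval_derivative_mul_sqrt_le hdeg hM hy) hx

/-- Markov brothers' inequality: a real polynomial of degree at most `q` bounded by 1 on
`[-1,1]` has derivative bounded by `q²` on `[-1,1]`. -/
theorem stmt5 (q : ℕ) (f : Polynomial ℝ) (hdeg : f.natDegree ≤ q)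
    (hb : ∀ x ∈ Set.Icc (-1 : ℝ) 1, |f.eval x| ≤ 1) :
    ∀ x ∈ Set.Icc (-1 : ℝ) 1, |f.derivative.eval x| ≤ (q : ℝ) ^ 2 := by
  have heval (p : ℝ[X]) (x : ℝ) : (p.map ofRealHom).eval (x : ℂ) = p.eval x :=
    (eval_map _ _).trans (eval₂_hom ofRealHom x)
  simpa [derivative_map, heval] using stmt5_general q (f.map ofRealHom) (M := 1)
    (natDegree_map_le.trans hdeg) (by simpa [heval] using hb)
end

section
/- Let H be a Hermitian operator on a finite-dimensional Hilbert space with ‖H‖ ≤ 1, with spectral decomposition H = ∑_n E_n |φ_n⟩⟨φ_n|. Let ψ be a unit vector, Ẽ ∈ [−1,1] real with ‖(H − Ẽ)ψ‖ ≤ η, and let f be a real polynomial of degree q satisfying |f(x)| ≤ 1 on [−1,1]. Then ‖f(H)ψ − f(Ẽ)ψ‖ ≤ q²·η. -/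
open scoped InnerProductSpace

/-!
With `g = (f - f(Et)) / (X - Et)` we have `f(H)ψ - f(Et)ψ = g(H)(H - Et)ψ`, and by the spectral
theorem `‖g(H)‖` is at most the supremum over `[-1, 1]` of the difference quotient `g`, which the
mean value theorem bounds by that of `|f'|`. What remains is the Markov brothers' inequality
`|f'| ≤ q²`.

Markov's inequality in turn follows from its case `P'(1) ≤ T_n'(1) = n²` at the endpoint, where
`T_n` is the Chebyshev polynomial. If `S` has degree less than `n`, `|S(cos θ) sin θ| ≤ M` for
all `θ` and `|y| ≤ 1`, then `M² - 2(1 - x²)S(yx)²` is bounded by `M²` on `[-1, 1]` and has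
derivative `4S(y)²` at `1`; hence `|S(y)| ≤ nM`, which is Schur's inequality. Applied to the
polynomial `B` for which `sin φ · B(cos φ)` is the odd part of `φ ↦ P(cos(θ + φ))`, it gives
Bernstein's inequality at `θ`; applied to `P'`, it turns Bernstein's inequality into Markov's.
-/

open Polynomial Set

section PolynomialInequalities

open Real

variable {P S : ℝ[X]} {n : ℕ} {M : ℝ}

theorem eval_one_derivative_le_of_forall_abs_le (hP : P.natDegree ≤ n)
    (hM : ∀ x ∈ Icc (-1 : ℝ) 1, |P.eval x| ≤ M) :
    P.derivative.eval 1 ≤ (n : ℝ) ^ 2 * M := by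
  have hM₀ : 0 ≤ M := (abs_nonneg _).trans (hM 1 (by simp))
  rcases hM₀.eq_or_lt with rfl | hM_pos
  · have hP₀ : P = 0 := eq_zero_of_infinite_isRoot P <|
      (Icc_infinite (by norm_num : (-1 : ℝ) < 1)).mono fun x hx ↦ abs_nonpos_iff.mp (hM x hx)
    simp [hP₀]
  · have h_le : (C M⁻¹ * P).derivative.eval 1 ≤ (Chebyshev.T ℝ n).derivative.eval 1 := by
      refine Chebyshev.eval_iterate_derivative_le_of_forall_abs_le_one (k := 1) le_rfl ?_ ?_
      · exact natDegree_le_iff_degree_le.mp ((natDegree_C_mul_le _ _).trans hP)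
      · intro x hx
        rw [eval_mul, eval_C, abs_mul, abs_of_pos (inv_pos.mpr hM_pos), inv_mul_le_one₀ hM_pos]
        exact hM x hx
    rwa [derivative_C_mul, eval_mul, eval_C, Chebyshev.derivative_T_eval_one, Int.cast_natCast,
      inv_mul_le_iff₀ hM_pos, mul_comm] at h_le

theorem abs_eval_one_le_of_forall_one_sub_sq_mul_sq_le (hS : S.degree < n) (hM₀ : 0 ≤ M)
    (hM : ∀ x ∈ Icc (-1 : ℝ) 1, (1 - x ^ 2) * S.eval x ^ 2 ≤ M ^ 2) :
    |S.eval 1| ≤ n * M := by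
  rcases n with _ | m
  · have hS₀ : S = 0 := by simpa using hS
    simp [hS₀]
  let Q : ℝ[X] := C (M ^ 2) - 2 * ((1 - X ^ 2) * S ^ 2)
  have hQ_natDegree : Q.natDegree ≤ 2 * (m + 1) := by
    have hS_natDegree : S.natDegree ≤ m := natDegree_le_iff_coeff_eq_zero.mpr fun k hk ↦
      coeff_eq_zero_of_degree_lt (hS.trans_le (Nat.cast_le.mpr hk))
    simp only [Q]
    compute_degree
    omega
  have hQ_bound : ∀ x ∈ Icc (-1 : ℝ) 1, |Q.eval x| ≤ M ^ 2 := by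
    intro x hx
    have h_nonneg : 0 ≤ (1 - x ^ 2) * S.eval x ^ 2 :=
      mul_nonneg (sub_nonneg.mpr ((sq_le_one_iff_abs_le_one x).mpr (abs_le.mpr hx))) (sq_nonneg _)
    have hQ_eval : Q.eval x = M ^ 2 - 2 * ((1 - x ^ 2) * S.eval x ^ 2) := by simp [Q]
    rw [hQ_eval, abs_le]
    constructor <;> linarith [hM x hx]
  have hQ_derivative : Q.derivative.eval 1 = 4 * S.eval 1 ^ 2 := by
    simp only [Q, derivative_sub, derivative_mul, derivative_C, derivative_ofNat, derivative_one,
      derivative_sq, derivative_X, eval_sub, eval_add, eval_mul, eval_pow, eval_C, eval_X, eval_one,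
      eval_zero, eval_ofNat]
    ring
  have h_sq : S.eval 1 ^ 2 ≤ ((m + 1 : ℕ) * M) ^ 2 := by
    have h := eval_one_derivative_le_of_forall_abs_le hQ_natDegree hQ_bound
    rw [hQ_derivative] at h
    push_cast at h ⊢
    linarith
  exact abs_le_of_sq_le_sq h_sq (by positivity)

theorem schur_inequality (hS : S.degree < n) (hM : ∀ θ : ℝ, |S.eval (cos θ) * sin θ| ≤ M) {y : ℝ}
    (hy : y ∈ Icc (-1 : ℝ) 1) :
    |S.eval y| ≤ n * M := by
  have hM₀ : 0 ≤ M := (abs_nonneg _).trans (hM 0)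
  have hS_sq : ∀ x ∈ Icc (-1 : ℝ) 1, (1 - x ^ 2) * S.eval x ^ 2 ≤ M ^ 2 := by
    intro x hx
    have h := sq_le_sq.mpr ((hM (arccos x)).trans (le_abs_self M))
    rwa [mul_pow, sin_sq, cos_arccos hx.1 hx.2, mul_comm] at h
  have h_dilate : ∀ x ∈ Icc (-1 : ℝ) 1,
      (1 - x ^ 2) * (S.comp (C y * X)).eval x ^ 2 ≤ M ^ 2 := by
    intro x hx
    have hyx : y * x ∈ Icc (-1 : ℝ) 1 := by
      rw [mem_Icc, ← abs_le, abs_mul]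
      exact mul_le_one₀ (abs_le.mpr hy) (abs_nonneg x) (abs_le.mpr hx)
    have h_sq_le : (y * x) ^ 2 ≤ x ^ 2 := by
      rw [mul_pow]
      exact mul_le_of_le_one_left (sq_nonneg x)
        ((sq_le_one_iff_abs_le_one y).mpr (abs_le.mpr hy))
    calc (1 - x ^ 2) * (S.comp (C y * X)).eval x ^ 2 = (1 - x ^ 2) * S.eval (y * x) ^ 2 := by
          simp only [eval_comp, eval_mul, eval_C, eval_X]
      _ ≤ (1 - (y * x) ^ 2) * S.eval (y * x) ^ 2 := by gcongr
      _ ≤ M ^ 2 := hS_sq _ hyx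
  have h_degree : (S.comp (C y * X)).degree < n := by
    rw [degree_lt_iff_coeff_zero] at hS ⊢
    intro k hk
    rw [comp_C_mul_X_coeff, hS k hk, zero_mul]
  simpa using abs_eval_one_le_of_forall_one_sub_sq_mul_sq_le h_degree hM₀ h_dilate

theorem exists_eval_mul_add_mul_eq_of_sq_add_sq_eq_one {R : Type*} [CommRing R] (a b : R)
    {p : R[X]} (hp : p.natDegree ≤ n) :
    ∃ A B : R[X], A.natDegree ≤ n ∧ B.degree < n ∧
      ∀ x y : R, x ^ 2 + y ^ 2 = 1 → p.eval (a * x + b * y) = A.eval x + y * B.eval x := by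
  induction n generalizing p with
  | zero =>
    rw [eq_C_of_natDegree_le_zero hp]
    exact ⟨C (p.coeff 0), 0, by simp, by simp, by simp⟩
  | succ n ih =>
    have hp_divX : p.divX.natDegree ≤ n := by
      rw [natDegree_divX_eq_natDegree_tsub_one]
      omega
    obtain ⟨A, B, hA, hB, h⟩ := ih hp_divX
    refine ⟨C (p.coeff 0) + C a * (X * A) + C b * ((1 - X ^ 2) * B), C a * (X * B) + C b * A,
      ?_, ?_, ?_⟩
    · rw [natDegree_le_iff_coeff_eq_zero] at hA ⊢
      rw [degree_lt_iff_coeff_zero] at hB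
      intro k hk
      obtain ⟨j, rfl⟩ : ∃ j, k = j + 2 := ⟨k - 2, by omega⟩
      simp [sub_mul, coeff_X_pow_mul, hA (j + 1) (by omega), hB j (by omega),
        hB (j + 2) (by omega)]
    · rw [natDegree_le_iff_coeff_eq_zero] at hA
      rw [degree_lt_iff_coeff_zero] at hB ⊢
      intro k hk
      obtain ⟨j, rfl⟩ : ∃ j, k = j + 1 := ⟨k - 1, by omega⟩
      simp [hA (j + 1) (by omega), hB j (by omega)]
    · intro x y hxy
      conv_lhs => rw [← divX_mul_X_add p]
      simp only [eval_add, eval_mul, eval_C, eval_X, eval_sub, eval_one, eval_pow, h x y hxy]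
      linear_combination (b * B.eval x) * hxy

theorem bernstein_inequality (hP : P.natDegree ≤ n) (hM : ∀ x ∈ Icc (-1 : ℝ) 1, |P.eval x| ≤ M)
    (θ : ℝ) : |P.derivative.eval (cos θ) * sin θ| ≤ n * M := by
  obtain ⟨A, B, -, hB, h_expand⟩ :=
    exists_eval_mul_add_mul_eq_of_sq_add_sq_eq_one (cos θ) (-sin θ) hP
  have h_split (φ : ℝ) : P.eval (cos (θ + φ)) = A.eval (cos φ) + sin φ * B.eval (cos φ) := by
    rw [← h_expand _ _ (cos_sq_add_sin_sq φ), cos_add, neg_mul, sub_eq_add_neg]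
  have h_odd (φ : ℝ) : |B.eval (cos φ) * sin φ| ≤ M := by
    have h_neg := h_split (-φ)
    rw [cos_neg, sin_neg] at h_neg
    have h₁ := abs_le.mp (hM _ (cos_mem_Icc (θ + φ)))
    have h₂ := abs_le.mp (hM _ (cos_mem_Icc (θ + -φ)))
    rw [h_split] at h₁
    rw [h_neg] at h₂
    rw [abs_le]
    constructor <;> linarith
  have h_derivative : B.eval 1 = P.derivative.eval (cos θ) * -sin θ := by
    have h_lhs : HasDerivAt (fun φ ↦ P.eval (cos (θ + φ)))
        (P.derivative.eval (cos θ) * -sin θ) 0 := by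
      simpa using ((P.hasDerivAt _).comp (θ + 0) (hasDerivAt_cos _)).comp_const_add θ 0
    have h_rhs : HasDerivAt (fun φ ↦ A.eval (cos φ) + sin φ * B.eval (cos φ)) (B.eval 1) 0 := by
      convert! ((A.hasDerivAt _).comp 0 (hasDerivAt_cos 0)).add
        ((hasDerivAt_sin 0).mul ((B.hasDerivAt _).comp 0 (hasDerivAt_cos 0))) using 1
      simp
    exact h_rhs.unique (funext h_split ▸ h_lhs)
  calc |P.derivative.eval (cos θ) * sin θ| = |B.eval 1| := by
        rw [h_derivative, mul_neg, abs_neg]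
    _ ≤ n * M := schur_inequality hB h_odd (by simp)

theorem markov_brothers_inequality (hP : P.natDegree ≤ n)
    (hM : ∀ x ∈ Icc (-1 : ℝ) 1, |P.eval x| ≤ M) {x : ℝ} (hx : x ∈ Icc (-1 : ℝ) 1) :
    |P.derivative.eval x| ≤ (n : ℝ) ^ 2 * M := by
  have h_degree : P.derivative.degree < n := by
    rw [degree_lt_iff_coeff_zero]
    intro k hk
    rw [coeff_derivative, coeff_eq_zero_of_natDegree_lt (by omega), zero_mul]
  rw [sq, mul_assoc]
  exact schur_inequality h_degree (bernstein_inequality hP hM) hx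

end PolynomialInequalities

theorem norm_dslope_le_of_norm_deriv_le {𝕜 E : Type*} [RCLike 𝕜] [NormedAddCommGroup E]
    [NormedSpace 𝕜 E] {f : 𝕜 → E} {s : Set 𝕜} {K : ℝ} (hs : Convex ℝ s)
    (hf : ∀ x ∈ s, DifferentiableAt 𝕜 f x) (hK : ∀ x ∈ s, ‖deriv f x‖ ≤ K) {a b : 𝕜}
    (ha : a ∈ s) (hb : b ∈ s) : ‖dslope f a b‖ ≤ K := by
  rcases eq_or_ne b a with rfl | hba
  · rw [dslope_same]
    exact hK b hb
  · have h_pos : 0 < ‖b - a‖ := norm_pos_iff.mpr (sub_ne_zero.mpr hba)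
    refine le_of_mul_le_mul_left ?_ h_pos
    rw [← norm_smul, sub_smul_dslope, mul_comm]
    exact hs.norm_image_sub_le_of_norm_deriv_le hf hK ha hb

theorem eval_divByMonic_X_sub_C_eq_dslope {𝕜 : Type*} [NontriviallyNormedField 𝕜] (p : 𝕜[X])
    (a x : 𝕜) : (p /ₘ (X - C a)).eval x = dslope (fun x ↦ p.eval x) a x := by
  rcases eq_or_ne x a with rfl | hxa
  · have h := congrArg (eval x) (divByMonic_add_X_sub_C_mul_derivative_divByMonic_eq_derivative p x)
    simpa using h
  · have h := congrArg (eval x) (X_sub_C_mul_divByMonic_eq_sub_modByMonic p a)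
    simp only [modByMonic_X_sub_C_eq_C_eval, eval_mul, eval_sub, eval_X, eval_C] at h
    rw [dslope_of_ne _ hxa, slope_def_field, ← h, mul_div_cancel_left₀ _ (sub_ne_zero.mpr hxa)]

theorem abs_eval_divByMonic_X_sub_C_le {P : ℝ[X]} {n : ℕ} {M : ℝ} (hP : P.natDegree ≤ n)
    (hM : ∀ x ∈ Icc (-1 : ℝ) 1, |P.eval x| ≤ M) {t x : ℝ} (ht : t ∈ Icc (-1 : ℝ) 1)
    (hx : x ∈ Icc (-1 : ℝ) 1) : |(P /ₘ (X - C t)).eval x| ≤ (n : ℝ) ^ 2 * M := by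
  rw [eval_divByMonic_X_sub_C_eq_dslope]
  exact norm_dslope_le_of_norm_deriv_le (convex_Icc (-1 : ℝ) 1) (fun y _ ↦ P.differentiableAt)
    (fun y hy ↦ by simpa using markov_brothers_inequality hP hM hy) ht hx

theorem norm_aeval_le_of_isSelfAdjoint {A : Type*} [CStarAlgebra A] {a : A}
    (ha : IsSelfAdjoint a) {p : ℝ[X]} {K : ℝ} (hp : ∀ x ∈ Icc (-‖a‖) ‖a‖, |p.eval x| ≤ K) :
    ‖aeval a p‖ ≤ K := by
  have hK : 0 ≤ K := (abs_nonneg _).trans (hp 0 (by simp))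
  rcases subsingleton_or_nontrivial A with _ | _
  · simpa [Subsingleton.elim (aeval a p) 0] using hK
  rw [← cfc_polynomial p a ha]
  exact norm_cfc_le hK fun x hx ↦ hp x (abs_le.mp (spectrum.norm_le_norm_of_mem hx))

theorem stmt6_general {E : Type*} [NormedAddCommGroup E] [InnerProductSpace ℂ E] [CompleteSpace E]
    {H : E →L[ℂ] E} (hH : IsSelfAdjoint H) (hH_norm : ‖H‖ ≤ 1) (ψ : E) {t : ℝ}
    (ht : t ∈ Icc (-1 : ℝ) 1) {q : ℕ} {f : ℝ[X]} (hf : f.natDegree ≤ q) {M : ℝ}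
    (hM : ∀ x ∈ Icc (-1 : ℝ) 1, |f.eval x| ≤ M) :
    ‖aeval H f ψ - ((f.eval t : ℝ) : ℂ) • ψ‖ ≤ (q : ℝ) ^ 2 * M * ‖H ψ - (t : ℂ) • ψ‖ := by
  set g := f /ₘ (X - C t)
  have hg_norm : ‖aeval H g‖ ≤ (q : ℝ) ^ 2 * M :=
    norm_aeval_le_of_isSelfAdjoint hH fun x hx ↦
      abs_eval_divByMonic_X_sub_C_le hf hM ht (Icc_subset_Icc (neg_le_neg hH_norm) hH_norm hx)
  have h_factor : aeval H f ψ - ((f.eval t : ℝ) : ℂ) • ψ = aeval H g (H ψ - (t : ℂ) • ψ) := by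
    have hfg : f - C (f.eval t) = g * (X - C t) := by
      rw [mul_comm, X_sub_C_mul_divByMonic_eq_sub_modByMonic, modByMonic_X_sub_C_eq_C_eval]
    have h := congrArg (fun p ↦ aeval H p ψ) hfg
    simpa [Algebra.algebraMap_eq_smul_one] using h
  rw [h_factor]
  exact (aeval H g).le_of_opNorm_le hg_norm _

/-- QSVT stability for a single approximate eigenstate: if `H` is Hermitian with `‖H‖ ≤ 1`,
`ψ` a unit vector, `Et ∈ [-1,1]` with `‖(H - Et)ψ‖ ≤ η`, and `f` a real polynomial of
degree at most `q` with `|f| ≤ 1` on `[-1,1]`, then `‖f(H)ψ - f(Et)ψ‖ ≤ q² η`. -/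
theorem stmt6 {n : ℕ}
    (H : EuclideanSpace ℂ (Fin n) →L[ℂ] EuclideanSpace ℂ (Fin n))
    (hH : IsSelfAdjoint H) (hHnorm : ‖H‖ ≤ 1)
    (ψ : EuclideanSpace ℂ (Fin n)) (hψ : ‖ψ‖ = 1)
    (Et : ℝ) (hEt : Et ∈ Set.Icc (-1 : ℝ) 1)
    (η : ℝ) (hη : 0 ≤ η)
    (happrox : ‖H ψ - (Et : ℂ) • ψ‖ ≤ η)
    (q : ℕ) (f : Polynomial ℝ) (hdeg : f.natDegree ≤ q)
    (hb : ∀ x ∈ Set.Icc (-1 : ℝ) 1, |f.eval x| ≤ 1) :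
    ‖(Polynomial.aeval H (f.map (algebraMap ℝ ℂ))) ψ - ((f.eval Et : ℝ) : ℂ) • ψ‖
      ≤ (q : ℝ) ^ 2 * η := by
  rw [aeval_map_algebraMap, ← mul_one ((q : ℝ) ^ 2)]
  exact (stmt6_general hH hHnorm ψ hEt hdeg hb).trans (by gcongr)
end
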